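/- arXiv:1205.5405 — 2 statements merged into one kernel-verified Lean document; each statement's English description precedes it below -/
import Mathlib

section
/- Let d ≥ 5 be an integer with d ≡ 1 (mod 4), set d' = ⌊d/4⌋, let k be a rational and ε a positive real such that 2 ≤ k < 2 + 1/(2d'−1) and ε·k·Σ_{j=0}^{d'−1} (k−1)^{2j} ≥ 1. If G is a fractionally k-colorable graph and W is a subset of its vertex set whose vertices are at pairwise graph distance at least d, then any fractional (k+ε)-precoloring of W can be extended to a fractional (k+ε)-coloring of G. -/
/-!
Let `m = d / 4`, `r = k + ε`, and let `a 0 = 0`, `a (n+1) = ε + (k-1) a n`; the numerical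
hypothesis on `ε` says exactly that `a (2m) ≥ 1`.

Spread a fractional `k`-coloring of `G` evenly over all of `[0,r)`: every vertex `v` gets a set
`B v` of measure `r/k > 1`, adjacent vertices get disjoint sets, and `B v` takes the proportion
`1/k` of each of finitely many prescribed sets (`exists_spread`). For each `w ∈ W` take chains
`R 0 ⊇ R 2 ⊇ ⋯` and `R 1 ⊇ R 3 ⊇ ⋯` inside the complement of `P w` and inside `R 1 = P w`
(`exists_chain`), empty from index `2m+1` on. A vertex at distance `i` from `w` uses colors from
`(B v \ R i) ∪ R (i+1)`. For neighbors at distances `i` and `i+1` these sets are disjoint, because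
`R (i+2) ⊆ R i` and `R (i+1)` is disjoint from `R (i+2)`; at distance `2m` or more they are
contained in `B v`. As the `B v` are evenly spread, the available measure for `i ≥ 1` is
`(r - |R i| - |R (i+1)|)/k + |R (i+1)|`, which is at least `1` iff
`|R i| ≤ ε + (k-1) |R (i+1)|`. Hence `|R i|` may be taken to be `a (2m+1-i)`, scaled down so that
`|R 1| = 1` (`exists_sizes`).

It remains that no edge disturbs this picture (`exists_levels`). Balls of radius `2m` around
distinct vertices of `W` are disjoint since `d = 4m+1`. An edge inside a level `i < 2m` would join
the two ends of a walk of length `2i`; but the color sets of such ends differ by measure at most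
`i(k-2) < 1` (`frac_even_walk`), so they cannot be disjoint.
-/

open MeasureTheory

/-- A fractional `r`-coloring of a graph `G`: an assignment of measurable subsets of the
real interval `[0,r)` to the vertices such that each vertex receives a set of Lebesgue
measure one and adjacent vertices receive disjoint sets. -/
def IsFracColoring {V : Type*} (G : SimpleGraph V) (r : ℝ) (c : V → Set ℝ) : Prop :=
  (∀ v, c v ⊆ Set.Ico 0 r) ∧ (∀ v, MeasurableSet (c v)) ∧ (∀ v, volume (c v) = 1) ∧
    ∀ u v, G.Adj u v → Disjoint (c u) (c v)

/-- `G` is fractionally `r`-colorable. -/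
def FracColorable {V : Type*} (G : SimpleGraph V) (r : ℝ) : Prop :=
  ∃ c, IsFracColoring G r c

/-- A fractional `r`-precoloring of the set `W` of vertices: each vertex of `W` is
assigned a measurable subset of `[0,r)` of Lebesgue measure one. -/
def IsFracPrecoloring {V : Type*} (r : ℝ) (W : Set V) (P : V → Set ℝ) : Prop :=
  ∀ w ∈ W, P w ⊆ Set.Ico 0 r ∧ MeasurableSet (P w) ∧ volume (P w) = 1

/-- The vertices of `W` are at pairwise graph distance at least `d` in `G`
(every walk between two distinct vertices of `W` has length at least `d`). -/
def DistAtLeast {V : Type*} (G : SimpleGraph V) (d : ℕ) (W : Set V) : Prop :=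
  ∀ u ∈ W, ∀ v ∈ W, u ≠ v → ∀ w : G.Walk u v, d ≤ w.length

/-! ### The color space -/

/-- Lebesgue measure on the interval `[0,r)` of colors. -/
noncomputable abbrev colorMeasure (r : ℝ) : Measure ℝ := volume.restrict (Set.Ico 0 r)

instance colorMeasure_finite (r : ℝ) : IsFiniteMeasure (colorMeasure r) :=
  ⟨by simp [colorMeasure]⟩

lemma colorMeasure_real_of_subset {r : ℝ} {E : Set ℝ} (hE : E ⊆ Set.Ico 0 r) :
    (colorMeasure r).real E = volume.real E := by
  rw [measureReal_restrict_apply' measurableSet_Ico, Set.inter_eq_left.2 hE]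

lemma colorMeasure_real_Ico {r : ℝ} (hr : 0 ≤ r) :
    (colorMeasure r).real (Set.Ico 0 r) = r := by
  rw [colorMeasure_real_of_subset subset_rfl]; simp [hr]

/-- The color space has no atoms: the measure of `E ∩ (-∞,x)` moves continuously from `0` to the
measure of `E`. The empty set is chosen when the required measure is `0`. -/
lemma exists_subset_real_eq (r : ℝ) {E : Set ℝ} (hE : MeasurableSet E) {t : ℝ} (ht0 : 0 ≤ t)
    (ht : t ≤ (colorMeasure r).real E) :
    ∃ F ⊆ E, MeasurableSet F ∧ (colorMeasure r).real F = t ∧ (t = 0 → F = ∅) := by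
  by_cases h0 : t = 0
  · exact ⟨∅, by simp, by simp, by simp [h0], fun _ => rfl⟩
  set g : ℝ → ℝ := fun x => (colorMeasure r).real (E ∩ Set.Iio x) with hg
  have hmono : Monotone g := fun x y hxy =>
    measureReal_mono (Set.inter_subset_inter_right _ (Set.Iio_subset_Iio hxy))
  have hstep : ∀ x y, x ≤ y → g y ≤ g x + (y - x) := by
    intro x y hxy
    have h1 : E ∩ Set.Iio y ⊆ (E ∩ Set.Iio x) ∪ Set.Ico x y := by
      rintro z ⟨hz, hzy⟩
      by_cases hzx : z < x
      · exact Or.inl ⟨hz, hzx⟩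
      · exact Or.inr ⟨not_lt.1 hzx, hzy⟩
    have h2 : (colorMeasure r).real (Set.Ico x y) ≤ y - x := by
      rw [measureReal_restrict_apply' measurableSet_Ico]
      calc volume.real (Set.Ico x y ∩ Set.Ico 0 r) ≤ volume.real (Set.Ico x y) :=
            measureReal_mono Set.inter_subset_left (by simp)
        _ = y - x := by simp [hxy]
    calc g y ≤ (colorMeasure r).real ((E ∩ Set.Iio x) ∪ Set.Ico x y) := measureReal_mono h1
      _ ≤ _ := measureReal_union_le _ _
      _ ≤ _ := by gcongr
  have hcont : Continuous g := by
    refine (LipschitzWith.of_dist_le' (K := 1) fun x y => ?_).continuous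
    rw [Real.dist_eq, Real.dist_eq, one_mul]
    rcases le_total x y with h | h
    · rw [abs_sub_comm, abs_sub_comm x, abs_of_nonneg (sub_nonneg.2 (hmono h)),
        abs_of_nonneg (sub_nonneg.2 h)]
      linarith [hstep x y h]
    · rw [abs_of_nonneg (sub_nonneg.2 (hmono h)), abs_of_nonneg (sub_nonneg.2 h)]
      linarith [hstep y x h]
  have hr : 0 ≤ r := by
    by_contra hr
    have : Set.Ico 0 r = ∅ := Set.Ico_eq_empty (by linarith)
    simp [colorMeasure, this] at ht
    exact h0 (le_antisymm ht ht0)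
  have hg0 : g 0 = 0 := by
    have : E ∩ Set.Iio 0 ∩ Set.Ico 0 r = ∅ := by
      ext z; simp; intro _ h1 h2; linarith
    simp only [hg]
    rw [measureReal_restrict_apply' measurableSet_Ico, this]; simp
  have hgr : g r = (colorMeasure r).real E := by
    have : E ∩ Set.Iio r ∩ Set.Ico 0 r = E ∩ Set.Ico 0 r := by
      ext z; simp; tauto
    simp only [hg]
    rw [measureReal_restrict_apply' measurableSet_Ico, this,
      measureReal_restrict_apply' measurableSet_Ico]
  obtain ⟨x, -, hx⟩ := intermediate_value_Icc hr hcont.continuousOn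
    (show t ∈ Set.Icc (g 0) (g r) from ⟨by rw [hg0]; exact ht0, by rw [hgr]; exact ht⟩)
  exact ⟨E ∩ Set.Iio x, Set.inter_subset_left, hE.inter measurableSet_Iio, hx, fun h => (h0 h).elim⟩

lemma exists_disjoint_subsets (r : ℝ) {ι : Type*} (s : Finset ι) (q : ι → ℝ)
    (hq : ∀ i, 0 ≤ q i) :
    ∀ E : Set ℝ, MeasurableSet E → ∑ i ∈ s, q i ≤ (colorMeasure r).real E →
      ∃ S : ι → Set ℝ, (∀ i ∈ s, S i ⊆ E ∧ MeasurableSet (S i) ∧ (colorMeasure r).real (S i) = q i ∧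
        (q i = 0 → S i = ∅)) ∧ ∀ i ∈ s, ∀ j ∈ s, i ≠ j → Disjoint (S i) (S j) := by
  classical
  induction s using Finset.induction_on with
  | empty => intro E _ _; exact ⟨fun _ => ∅, by simp, by simp⟩
  | insert a s ha ih =>
    intro E hE hsum
    rw [Finset.sum_insert ha] at hsum
    have hnn : 0 ≤ ∑ i ∈ s, q i := Finset.sum_nonneg fun i _ => hq i
    obtain ⟨F, hFE, hF, hFq, hF0⟩ := exists_subset_real_eq r hE (hq a) (by linarith)
    obtain ⟨S, hS, hSd⟩ := ih (E \ F) (hE.diff hF) (by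
      rw [measureReal_sdiff hFE hF]; linarith)
    have hne : ∀ i ∈ s, i ≠ a := fun i hi h => ha (h ▸ hi)
    have hdF : ∀ i ∈ s, Disjoint (S i) F := fun i hi =>
      Set.disjoint_sdiff_left.mono_left (hS i hi).1
    refine ⟨Function.update S a F, ?_, ?_⟩
    · intro i hi
      rcases Finset.mem_insert.1 hi with rfl | hi
      · rw [Function.update_self]
        exact ⟨hFE, hF, hFq, hF0⟩
      · rw [Function.update_of_ne (hne i hi)]
        exact ⟨(hS i hi).1.trans Set.sdiff_subset, (hS i hi).2⟩
    · intro i hi j hj hij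
      rcases Finset.mem_insert.1 hi with rfl | hi <;> rcases Finset.mem_insert.1 hj with rfl | hj
      · exact (hij rfl).elim
      · rw [Function.update_self, Function.update_of_ne (hne j hj)]
        exact (hdF j hj).symm
      · rw [Function.update_self, Function.update_of_ne hij]
        exact hdF i (Finset.mem_of_mem_insert_of_ne ‹_› hij)
      · rw [Function.update_of_ne (hne i hi), Function.update_of_ne (hne j hj)]
        exact hSd i hi j hj hij

/-! ### Spreading a coloring evenly -/

/-- The atom with membership pattern `T` of the set algebra on `[0,r)` generated by the `Q j`. -/
def atom {J : Type*} (r : ℝ) (Q : J → Set ℝ) (T : Set J) : Set ℝ :=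
  {x ∈ Set.Ico 0 r | {j | x ∈ Q j} = T}

lemma measurableSet_pattern {J : Type*} [Finite J] {Q : J → Set ℝ}
    (hQ : ∀ j, MeasurableSet (Q j)) (T : Set J) : MeasurableSet {x | {j | x ∈ Q j} = T} := by
  have : {x | {j | x ∈ Q j} = T} = ⋂ j, {x | x ∈ Q j ↔ j ∈ T} := by
    ext x; simp [Set.ext_iff]
  rw [this]
  refine MeasurableSet.iInter fun j => ?_
  by_cases hj : j ∈ T
  · simpa [hj] using hQ j
  · simp only [hj, iff_false]
    exact (hQ j).compl

lemma measurableSet_atom {J : Type*} [Finite J] (r : ℝ) {Q : J → Set ℝ}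
    (hQ : ∀ j, MeasurableSet (Q j)) (T : Set J) : MeasurableSet (atom r Q T) :=
  measurableSet_Ico.inter (measurableSet_pattern hQ T)

open Classical in
lemma sum_atom {J : Type*} [Fintype J] (r : ℝ) {Q : J → Set ℝ}
    (hQ : ∀ j, MeasurableSet (Q j)) (A : Finset (Set J)) :
    ∑ T ∈ A, (colorMeasure r).real (atom r Q T) =
      (colorMeasure r).real {x | {j | x ∈ Q j} ∈ A} := by
  have h := sum_measureReal_preimage_singleton (μ := colorMeasure r) A
    (f := fun x => {j | x ∈ Q j}) (fun T _ => measurableSet_pattern hQ T)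
  refine Eq.trans (Finset.sum_congr rfl fun T _ => ?_) h
  rw [measureReal_restrict_apply' measurableSet_Ico, measureReal_restrict_apply' measurableSet_Ico]
  congr 1
  ext x; simp [atom]; tauto

/-- A fractional `k`-coloring can be spread evenly over the color space `[0,r)`: there are sets
`B v` respecting adjacency that occupy the proportion `1/k` of each of finitely many prescribed
sets `Q j`. Each atom of the algebra generated by the `Q j` is split in the proportions in which
`[0,k)` is split by the given coloring. -/
lemma exists_spread {V : Type*} [Fintype V] {G : SimpleGraph V} {k r : ℝ} (hk : 0 < k)
    (hG : FracColorable G k) {J : Type*} [Fintype J] (Q : J → Set ℝ)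
    (hQ : ∀ j, MeasurableSet (Q j)) :
    ∃ B : V → Set ℝ, (∀ v, B v ⊆ Set.Ico 0 r) ∧ (∀ v, MeasurableSet (B v)) ∧
      (∀ u v, G.Adj u v → Disjoint (B u) (B v)) ∧
      ∀ v j, (colorMeasure r).real (B v ∩ Q j) = (colorMeasure r).real (Q j) / k := by
  classical
  obtain ⟨c, hc1, hc2, hc3, hc4⟩ := hG
  set q : Set J → Set V → ℝ := fun T I =>
    (colorMeasure r).real (atom r Q T) * ((colorMeasure k).real (atom k c I) / k) with hq
  have hex : ∀ T : Set J, ∃ S : Set V → Set ℝ, (∀ I ∈ (Finset.univ : Finset (Set V)),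
      S I ⊆ atom r Q T ∧ MeasurableSet (S I) ∧ (colorMeasure r).real (S I) = q T I ∧
        (q T I = 0 → S I = ∅)) ∧ ∀ I ∈ (Finset.univ : Finset (Set V)),
        ∀ I' ∈ (Finset.univ : Finset (Set V)), I ≠ I' → Disjoint (S I) (S I') := by
    intro T
    refine exists_disjoint_subsets r Finset.univ (q T) (fun I => by positivity) _
      (measurableSet_atom r hQ T) (le_of_eq ?_)
    simp only [hq]
    rw [← Finset.mul_sum, ← Finset.sum_div, sum_atom k hc2]
    have : (colorMeasure k).real {x | {j | x ∈ c j} ∈ (Finset.univ : Finset (Set V))} = k := by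
      simp [hk.le]
    rw [this, div_self hk.ne', mul_one]
  choose S hS hSd using hex
  have hdisj : ∀ a b : Set J × Set V, a ≠ b → Disjoint (S a.1 a.2) (S b.1 b.2) := by
    rintro ⟨T, I⟩ ⟨T', I'⟩ hne
    by_cases hT : T = T'
    · subst hT
      exact hSd T I (by simp) I' (by simp) (fun h => hne (by rw [h]))
    · rw [Set.disjoint_left]
      intro x hx hx'
      exact hT (((hS T I (by simp)).1 hx).2.symm.trans ((hS T' I' (by simp)).1 hx').2)
  refine ⟨fun v => ⋃ a ∈ (Finset.univ.filter fun a : Set J × Set V => v ∈ a.2), S a.1 a.2,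
    ?_, ?_, ?_, ?_⟩
  · intro v
    refine Set.iUnion₂_subset fun a _ => ?_
    exact (hS a.1 a.2 (by simp)).1.trans fun x hx => hx.1
  · intro v
    exact Finset.measurableSet_biUnion _ fun a _ => (hS a.1 a.2 (by simp)).2.1
  · intro u v huv
    rw [Set.disjoint_left]
    intro x hx hx'
    simp only [Finset.mem_filter, Finset.mem_univ, true_and, Set.mem_iUnion, exists_prop] at hx hx'
    obtain ⟨a, ha, hxa⟩ := hx
    obtain ⟨b, hb, hxb⟩ := hx'
    obtain rfl : a = b := by
      by_contra hab
      exact Set.disjoint_left.1 (hdisj a b hab) hxa hxb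
    -- A pattern containing both ends of an edge has an empty atom, so it received no colors.
    have hempty : atom k c a.2 = ∅ := by
      rw [Set.eq_empty_iff_forall_notMem]
      rintro y ⟨-, hy⟩
      rw [← hy] at ha hb
      exact Set.disjoint_left.1 (hc4 u v huv) ha hb
    rw [(hS a.1 a.2 (by simp)).2.2.2 (by simp [hq, hempty])] at hxa
    exact hxa
  · intro v j
    have hset : (⋃ a ∈ (Finset.univ.filter fun a : Set J × Set V => v ∈ a.2), S a.1 a.2) ∩ Q j =
        ⋃ a ∈ (Finset.univ.filter fun T : Set J => j ∈ T) ×ˢ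
          (Finset.univ.filter fun I : Set V => v ∈ I), S a.1 a.2 := by
      ext x
      simp only [Set.mem_inter_iff, Finset.mem_filter, Finset.mem_univ, true_and, Set.mem_iUnion,
        exists_prop, Finset.mem_product]
      constructor
      · rintro ⟨⟨a, ha, hx⟩, hj⟩
        refine ⟨a, ⟨?_, ha⟩, hx⟩
        rw [← ((hS a.1 a.2 (by simp)).1 hx).2]; exact hj
      · rintro ⟨a, ⟨hj, ha⟩, hx⟩
        refine ⟨⟨a, ha, hx⟩, ?_⟩
        rw [← ((hS a.1 a.2 (by simp)).1 hx).2] at hj; exact hj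
    rw [hset, measureReal_biUnion_finset (fun a _ b _ hab => hdisj a b hab)
      (fun a _ => (hS a.1 a.2 (by simp)).2.1)]
    rw [Finset.sum_congr rfl fun a _ => (hS a.1 a.2 (by simp)).2.2.1, Finset.sum_product]
    simp only [hq]
    simp_rw [← Finset.mul_sum, ← Finset.sum_div, ← Finset.sum_mul]
    rw [sum_atom r hQ, sum_atom k hc2]
    simp only [Finset.mem_filter, Finset.mem_univ, true_and, Set.mem_ofPred_eq, Set.ofPred_mem_eq]
    have : (colorMeasure k).real (c v) = 1 := by
      rw [colorMeasure_real_of_subset (hc1 v), Measure.real, hc3]; simp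
    rw [this]; ring

/-! ### Chains of color sets -/

/-- Alternately shrinking chains: `R 0 ⊇ R 2 ⊇ ⋯` and `R 1 ⊇ R 3 ⊇ ⋯` with prescribed measures,
starting from two disjoint sets. -/
lemma exists_chain (r : ℝ) {X Y : Set ℝ} (hX : MeasurableSet X) (hY : MeasurableSet Y)
    (hXY : Disjoint X Y) (s : ℕ → ℝ) (hs : ∀ i, 0 ≤ s i) (hs2 : ∀ i, s (i + 2) ≤ s i)
    (hsX : (colorMeasure r).real X = s 0) (hsY : (colorMeasure r).real Y = s 1) :
    ∃ R : ℕ → Set ℝ, R 0 = X ∧ R 1 = Y ∧ (∀ i, MeasurableSet (R i)) ∧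
      (∀ i, R (i + 2) ⊆ R i) ∧ (∀ i, Disjoint (R i) (R (i + 1))) ∧
      (∀ i, (colorMeasure r).real (R i) = s i) ∧ ∀ i, s (i + 2) = 0 → R (i + 2) = ∅ := by
  have hex : ∀ (E : Set ℝ) (t : ℝ), ∃ F, MeasurableSet E → 0 ≤ t → t ≤ (colorMeasure r).real E →
      F ⊆ E ∧ MeasurableSet F ∧ (colorMeasure r).real F = t ∧ (t = 0 → F = ∅) := by
    intro E t
    by_cases h : MeasurableSet E ∧ 0 ≤ t ∧ t ≤ (colorMeasure r).real E
    · obtain ⟨F, hF⟩ := exists_subset_real_eq r h.1 h.2.1 h.2.2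
      exact ⟨F, fun _ _ _ => hF⟩
    · exact ⟨∅, fun h1 h2 h3 => (h ⟨h1, h2, h3⟩).elim⟩
  choose sub hsub using hex
  -- The pair `(R i, R (i+1))` is built recursively.
  let p : ℕ → Set ℝ × Set ℝ := fun n =>
    Nat.rec (X, Y) (fun i q => (q.2, sub q.1 (s (i + 2)))) n
  set R : ℕ → Set ℝ := fun n => (p n).1 with hR
  have hR2 : ∀ i, R (i + 2) = sub (R i) (s (i + 2)) := fun i => rfl
  have hbase : ∀ i, (MeasurableSet (R i) ∧ (colorMeasure r).real (R i) = s i) ∧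
      (MeasurableSet (R (i + 1)) ∧ (colorMeasure r).real (R (i + 1)) = s (i + 1)) := by
    intro i
    induction i with
    | zero => exact ⟨⟨hX, hsX⟩, hY, hsY⟩
    | succ i ih =>
      refine ⟨ih.2, ?_⟩
      have := hsub (R i) (s (i + 2)) ih.1.1 (hs _) (by rw [ih.1.2]; exact hs2 i)
      rw [← hR2] at this
      exact ⟨this.2.1, this.2.2.1⟩
  have hall : ∀ i, R (i + 2) ⊆ R i ∧ (s (i + 2) = 0 → R (i + 2) = ∅) := by
    intro i
    have := hsub (R i) (s (i + 2)) (hbase i).1.1 (hs _) (by rw [(hbase i).1.2]; exact hs2 i)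
    rw [← hR2] at this
    exact ⟨this.1, this.2.2.2⟩
  refine ⟨R, rfl, rfl, fun i => (hbase i).1.1, fun i => (hall i).1, ?_, fun i => (hbase i).1.2,
    fun i => (hall i).2⟩
  intro i
  induction i with
  | zero => exact hXY
  | succ i ih => exact ih.symm.mono_right (hall i).1

/-! ### Distance levels around the precolored vertices -/

/-- Two neighbors of a common vertex share all but measure `k - 2` of their colors; iterate along
the walk. -/
lemma frac_even_walk {V : Type*} {G : SimpleGraph V} {k : ℝ} (hk : 0 ≤ k) {c : V → Set ℝ}
    (hc : IsFracColoring G k c) (n : ℕ) :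
    ∀ (u v : V) (p : G.Walk u v), p.length = 2 * n →
      (colorMeasure k).real (c u \ c v) ≤ n * (k - 2) := by
  obtain ⟨hc1, hc2, hc3, hc4⟩ := hc
  have hone : ∀ v, (colorMeasure k).real (c v) = 1 := fun v => by
    rw [colorMeasure_real_of_subset (hc1 v), Measure.real, hc3]; simp
  induction n with
  | zero =>
    intro u v p hp
    obtain rfl := SimpleGraph.Walk.eq_of_length_eq_zero (by simpa using hp)
    simp
  | succ n ih =>
    intro u v p hp
    match p, hp with
    | .cons (v := a) h (.cons (v := b) h' q), hp =>
      have hq : q.length = 2 * n := by simp at hp; omega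
      have h1 := ih b v q hq
      have hsub : c u \ c v ⊆ (c u \ c b) ∪ (c b \ c v) := by
        intro x hx
        by_cases hb : x ∈ c b
        · exact Or.inr ⟨hb, hx.2⟩
        · exact Or.inl ⟨hx.1, hb⟩
      have h2 := measureReal_mono (μ := colorMeasure k) hsub
      have h3 := measureReal_union_le (μ := colorMeasure k) (c u \ c b) (c b \ c v)
      have hd : Disjoint (c u ∪ c b) (c a) :=
        Set.disjoint_union_left.2 ⟨hc4 _ _ h, (hc4 _ _ h').symm⟩
      have h4 := measureReal_union (μ := colorMeasure k) hd (hc2 a)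
      have h5 : (colorMeasure k).real (c u ∪ c b ∪ c a) ≤ k := by
        calc _ ≤ (colorMeasure k).real (Set.Ico 0 k) := measureReal_mono
              (Set.union_subset (Set.union_subset (hc1 u) (hc1 b)) (hc1 a))
          _ = k := colorMeasure_real_Ico hk
      have h6 := measureReal_union (μ := colorMeasure k)
        (Set.disjoint_sdiff_left (s := c b) (t := c u)) (hc2 b)
      rw [Set.sdiff_union_self] at h6
      rw [hone] at h4 h6
      push_cast
      linarith
    | .cons h .nil, hp => simp at hp; omega

/-- Levels and centers. `lev v` is the distance from `v` to `W`, truncated at `2m+1`, and `ctr v`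
is the vertex of `W` realizing it (arbitrary when the truncation is active). Edges between vertices
not both at level at least `2m` stay within the ball around one center and join consecutive levels:
an edge inside a level would close an odd walk too short for the fractional chromatic number. -/
lemma exists_levels {V : Type*} {G : SimpleGraph V} {k : ℝ} {d m : ℕ} (hm : 1 ≤ m)
    (hd : d = 4 * m + 1) (hk2 : 2 ≤ k) (hk : k < 2 + 1 / (2 * (m : ℝ) - 1))
    (hG : FracColorable G k) {W : Set V} (hW : DistAtLeast G d W) :
    ∃ (lev : V → ℕ) (ctr : V → V), (∀ w ∈ W, lev w = 0 ∧ ctr w = w) ∧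
      (∀ v, lev v = 0 → v ∈ W) ∧
      ∀ u v, G.Adj u v → (2 * m ≤ lev u ∧ 2 * m ≤ lev v) ∨
        (ctr u = ctr v ∧ (lev v = lev u + 1 ∨ lev u = lev v + 1)) := by
  classical
  obtain ⟨c, hc⟩ := hG
  let D : V → Set ℕ := fun v => {n | n = 2 * m + 1 ∨ ∃ w ∈ W, ∃ p : G.Walk w v, p.length = n}
  have hD : ∀ v, (D v).Nonempty := fun v => ⟨2 * m + 1, Or.inl rfl⟩
  set lev : V → ℕ := fun v => sInf (D v) with hlev
  have hle : ∀ v, ∀ w ∈ W, ∀ p : G.Walk w v, lev v ≤ p.length := fun v w hw p =>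
    Nat.sInf_le (Or.inr ⟨w, hw, p, rfl⟩)
  have hex : ∀ v, ∃ w, lev v ≤ 2 * m → w ∈ W ∧ ∃ p : G.Walk w v, p.length = lev v := by
    intro v
    rcases Nat.sInf_mem (hD v) with h | ⟨w, hw, p, hp⟩
    · exact ⟨v, fun h' => by simp only [hlev] at h'; omega⟩
    · exact ⟨w, fun _ => ⟨hw, p, hp⟩⟩
  choose ctr hctr using hex
  have huniq : ∀ v, ∀ w ∈ W, ∀ p : G.Walk w v, p.length ≤ 2 * m → ctr v = w := by
    intro v w hw p hp
    obtain ⟨hcW, q, hq⟩ := hctr v ((hle v w hw p).trans hp)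
    by_contra hne
    have := hW _ hcW _ hw hne (q.append p.reverse)
    have h1 := hle v w hw p
    simp only [SimpleGraph.Walk.length_append, SimpleGraph.Walk.length_reverse] at this
    omega
  have hkey : ∀ u v, G.Adj u v → lev u < 2 * m →
      ctr u = ctr v ∧ lev v ≤ lev u + 1 ∧ lev v ≠ lev u := by
    intro u v huv hu
    obtain ⟨hcW, p, hp⟩ := hctr u hu.le
    have hl : (p.concat huv).length = lev u + 1 := by simp [hp]
    refine ⟨(huniq v _ hcW (p.concat huv) (by omega)).symm, hl ▸ hle v _ hcW (p.concat huv), ?_⟩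
    intro heq
    obtain ⟨hcW', p', hp'⟩ := hctr v (by omega)
    have hcc : ctr v = ctr u := huniq v _ hcW (p.concat huv) (by omega)
    have hwalk : ∃ q : G.Walk u v, q.length = 2 * lev u := by
      refine ⟨p.reverse.append (p'.copy hcc rfl), ?_⟩
      simp; omega
    obtain ⟨q, hq⟩ := hwalk
    have h1 := frac_even_walk (by linarith) hc (lev u) u v q hq
    obtain ⟨hc1, hc2, hc3, hc4⟩ := hc
    rw [(hc4 u v huv).sdiff_eq_left, colorMeasure_real_of_subset (hc1 u), Measure.real, hc3] at h1
    have hm1 : (1 : ℝ) ≤ m := by exact_mod_cast hm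
    have h2 : (lev u : ℝ) ≤ 2 * m - 1 := by
      have : lev u + 1 ≤ 2 * m := hu
      have : ((lev u + 1 : ℕ) : ℝ) ≤ (2 * m : ℕ) := by exact_mod_cast this
      push_cast at this; linarith
    have h3 : (k - 2) * (2 * (m : ℝ) - 1) < 1 := by
      rw [← lt_div_iff₀ (by linarith)]; linarith
    have h4 : (lev u : ℝ) * (k - 2) ≤ (2 * m - 1) * (k - 2) :=
      mul_le_mul_of_nonneg_right h2 (by linarith)
    simp at h1
    linarith
  refine ⟨lev, ctr, ?_, ?_, ?_⟩
  · intro w hw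
    refine ⟨Nat.le_zero.1 (hle w w hw .nil), huniq w w hw .nil (by simp)⟩
  · intro v hv
    obtain ⟨hcW, p, hp⟩ := hctr v (by omega)
    rw [← SimpleGraph.Walk.eq_of_length_eq_zero (hp.trans hv)]
    exact hcW
  · intro u v huv
    have h1 := hkey u v huv
    have h2 := hkey v u huv.symm
    by_cases hu : lev u < 2 * m
    · have h1 := h1 hu
      refine Or.inr ⟨h1.1, ?_⟩
      by_cases hv : lev v < 2 * m
      · have h2 := h2 hv; omega
      · omega
    · by_cases hv : lev v < 2 * m
      · have h2 := h2 hv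
        exact Or.inr ⟨h2.1.symm, by omega⟩
      · exact Or.inl ⟨by omega, by omega⟩

/-! ### Sizes of the chain sets -/

/-- The geometric sum driving the recursion, `a 0 = 0` and `a (n+1) = ε + (k-1) a n`. -/
noncomputable def budget (k ε : ℝ) (n : ℕ) : ℝ := ε * ∑ j ∈ Finset.range n, (k - 1) ^ j

lemma budget_succ (k ε : ℝ) (n : ℕ) : budget k ε (n + 1) = ε + (k - 1) * budget k ε n := by
  simp only [budget, Finset.sum_range_succ', pow_succ, ← Finset.sum_mul]
  ring

lemma budget_two_mul (k ε : ℝ) (m : ℕ) :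
    budget k ε (2 * m) = ε * k * ∑ j ∈ Finset.range m, (k - 1) ^ (2 * j) := by
  induction m with
  | zero => simp [budget]
  | succ m ih =>
    rw [Finset.sum_range_succ, mul_add (ε * k), ← ih]
    simp only [budget, show 2 * (m + 1) = 2 * m + 1 + 1 by ring, Finset.sum_range_succ]
    ring

lemma budget_mono {k ε : ℝ} (hk : 1 ≤ k) (hε : 0 ≤ ε) : Monotone (budget k ε) := by
  intro a b hab
  refine mul_le_mul_of_nonneg_left (Finset.sum_le_sum_of_subset_of_nonneg ?_ ?_) hε
  · simpa using hab
  · intro i _ _; exact pow_nonneg (by linarith) _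

/-- Measures of the sets given up at each level: nonnegative reals starting at `k + ε - 1` and `1`,
vanishing from level `2m+1` on, and affordable in that the loss at one level is at most
`ε + (k-1)` times the gain from the next. The budget sequence, read backwards and scaled so that
its value at `2m` becomes `1`, has these properties. -/
lemma exists_sizes {k ε : ℝ} {m : ℕ} (hm : 1 ≤ m) (hk : 2 ≤ k) (hε : 0 < ε)
    (h : 1 ≤ ε * k * ∑ j ∈ Finset.range m, (k - 1) ^ (2 * j)) :
    ∃ s : ℕ → ℝ, s 0 = k + ε - 1 ∧ s 1 = 1 ∧ (∀ i, 0 ≤ s i) ∧ (∀ i, s (i + 2) ≤ s i) ∧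
      (∀ i, 2 * m ≤ i → s (i + 1) = 0) ∧ ∀ i, s (i + 1) ≤ ε + (k - 1) * s (i + 2) := by
  rw [← budget_two_mul] at h
  set A := budget k ε (2 * m) with hA
  have hApos : 0 < A := by linarith
  have hmono := budget_mono (k := k) (ε := ε) (by linarith) hε.le
  have h0 : budget k ε 0 = 0 := by simp [budget]
  have hnn : ∀ n, 0 ≤ budget k ε n := fun n => h0 ▸ hmono (Nat.zero_le n)
  refine ⟨fun i => if i = 0 then k + ε - 1 else budget k ε (2 * m + 1 - i) / A, by simp, ?_, ?_,
    ?_, ?_, ?_⟩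
  · simp [← hA, hApos.ne']
  · intro i
    dsimp only
    split_ifs
    · linarith
    · exact div_nonneg (hnn _) hApos.le
  · intro i
    by_cases hi : i = 0
    · subst hi
      have : budget k ε (2 * m + 1 - 2) / A ≤ 1 := by
        rw [div_le_one hApos]; exact hmono (by omega)
      simp only [zero_add, if_true, OfNat.ofNat_ne_zero, if_false]
      linarith
    · simp only [hi, if_false, Nat.add_eq_zero_iff, false_and]
      exact div_le_div_of_nonneg_right (hmono (by omega)) hApos.le
  · intro i hi
    simp [show 2 * m - i = 0 by omega, h0]
  · intro i
    simp only [Nat.add_eq_zero_iff, OfNat.ofNat_ne_zero, one_ne_zero, and_false, if_false]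
    rcases Nat.eq_zero_or_pos (2 * m - i) with hi | hi
    · rw [show 2 * m + 1 - (i + 1) = 0 by omega, show 2 * m + 1 - (i + 2) = 0 by omega, h0]
      simpa using hε.le
    · obtain ⟨n, hn⟩ := Nat.exists_eq_add_of_le' hi
      rw [show 2 * m + 1 - (i + 1) = n + 1 by omega, show 2 * m + 1 - (i + 2) = n by omega,
        budget_succ, add_div, mul_div_assoc]
      have : ε / A ≤ ε := div_le_self hε.le h
      linarith

/-! ### The extension -/

/-- Extension theorem for distances congruent to one mod four. -/
theorem extend_d1 (d : ℕ) (hd : 5 ≤ d) (hd4 : d % 4 = 1) (k : ℚ) (ε : ℝ) (hε : 0 < ε)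
    (hk2 : 2 ≤ (k : ℝ)) (hk3 : (k : ℝ) < 2 + 1 / (2 * ((d / 4 : ℕ) : ℝ) - 1))
    (hineq : 1 ≤ ε * (k : ℝ) * ∑ j ∈ Finset.range (d / 4), ((k : ℝ) - 1) ^ (2 * j))
    (V : Type) [Fintype V] (G : SimpleGraph V) (W : Set V)
    (hG : FracColorable G (k : ℝ)) (hW : DistAtLeast G d W)
    (P : V → Set ℝ) (hP : IsFracPrecoloring ((k : ℝ) + ε) W P) :
    ∃ c, IsFracColoring G ((k : ℝ) + ε) c ∧ ∀ w ∈ W, c w = P w := by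
  classical
  set m := d / 4 with hm
  have hm1 : 1 ≤ m := by omega
  generalize (k : ℝ) = k at *
  set r := k + ε with hr
  have hr0 : 0 ≤ r := by linarith
  obtain ⟨s, hs0, hs1, hsnn, hs2, hsz, hsk⟩ := exists_sizes hm1 hk2 hε hineq
  obtain ⟨lev, ctr, hlW, hl0, hadj⟩ := exists_levels hm1 (by omega : d = 4 * m + 1) hk2 hk3 hG hW
  -- Off `W` the precoloring is replaced by an irrelevant default, so that chains exist everywhere.
  have hP' : ∀ v, ∃ Q : Set ℝ, Q ⊆ Set.Ico 0 r ∧ MeasurableSet Q ∧ volume Q = 1 ∧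
      (v ∈ W → Q = P v) := by
    intro v
    by_cases hv : v ∈ W
    · exact ⟨P v, (hP v hv).1, (hP v hv).2.1, (hP v hv).2.2, fun _ => rfl⟩
    · exact ⟨Set.Ico 0 1, Set.Ico_subset_Ico_right (by linarith), measurableSet_Ico, by simp,
        fun h => (hv h).elim⟩
  choose P' hP1 hP2 hP3 hP4 using hP'
  have hPr : ∀ v, (colorMeasure r).real (P' v) = 1 := fun v => by
    rw [colorMeasure_real_of_subset (hP1 v), Measure.real, hP3]; simp
  have hchain := fun v => exists_chain r (measurableSet_Ico.diff (hP2 v)) (hP2 v)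
    (Set.disjoint_sdiff_left (s := P' v) (t := Set.Ico 0 r)) s hsnn hs2
    (by rw [measureReal_sdiff (hP1 v) (hP2 v), colorMeasure_real_Ico hr0, hPr, hs0])
    (by rw [hPr, hs1])
  choose R hR0 hR1 hRm hRsub hRd hRs hRe using hchain
  have hRempty : ∀ v i, 2 * m + 1 ≤ i → R v i = ∅ := by
    intro v i hi
    obtain ⟨j, rfl⟩ := Nat.exists_eq_add_of_le' (show 2 ≤ i by omega)
    exact hRe v j (hsz (j + 1) (by omega))
  have hRr : ∀ v i, R v i ⊆ Set.Ico 0 r := by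
    intro v i
    induction i using Nat.twoStepInduction with
    | zero => rw [hR0]; exact Set.sdiff_subset
    | one => rw [hR1]; exact hP1 v
    | more i ih _ => exact (hRsub v i).trans ih
  obtain ⟨B, hB1, hB2, hB3, hB4⟩ := exists_spread (r := r) (by linarith : 0 < k) hG
    (fun j : Option (V × Fin (2 * m + 1)) => j.elim (Set.Ico 0 r) fun a => R a.1 a.2)
    (by rintro (_ | a); exacts [measurableSet_Ico, hRm _ _])
  have hBr : ∀ v, (colorMeasure r).real (B v) = r / k := by
    intro v
    have := hB4 v none
    simp only [Option.elim_none] at this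
    rwa [Set.inter_eq_left.2 (hB1 v), colorMeasure_real_Ico hr0] at this
  have hBR : ∀ v w i, (colorMeasure r).real (B v ∩ R w i) = s i / k := by
    intro v w i
    rw [← hRs w i]
    rcases Nat.lt_or_ge i (2 * m + 1) with hi | hi
    · exact hB4 v (some (w, ⟨i, hi⟩))
    · simp [hRempty w i hi]
  -- The colors available to `v`: drop the set of its own level, gain the set of the next one.
  set C : V → Set ℝ := fun v => (B v \ R (ctr v) (lev v)) ∪ R (ctr v) (lev v + 1) with hC
  have hCm : ∀ v, MeasurableSet (C v) := fun v => ((hB2 v).diff (hRm _ _)).union (hRm _ _)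
  have hCsub : ∀ v, C v ⊆ Set.Ico 0 r := fun v =>
    Set.union_subset (Set.sdiff_subset.trans (hB1 v)) (hRr _ _)
  have hCpair : ∀ u v, G.Adj u v → ctr u = ctr v → lev v = lev u + 1 → Disjoint (C u) (C v) := by
    intro u v huv hct hl
    simp only [hC, ← hct, hl]
    have h1 := Set.disjoint_left.1 (hB3 u v huv)
    have h2 := Set.disjoint_left.1 (hRd (ctr u) (lev u + 1))
    have h3 := hRsub (ctr u) (lev u)
    rw [Set.disjoint_left]
    rintro x (⟨hx1, hx2⟩ | hx) (⟨hy1, hy2⟩ | hy)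
    · exact h1 hx1 hy1
    · exact hx2 (h3 hy)
    · exact hy2 hx
    · exact h2 hx hy
  have hCfar : ∀ v, 2 * m ≤ lev v → C v ⊆ B v := by
    intro v hv
    simp only [hC, hRempty (ctr v) (lev v + 1) (by omega), Set.union_empty]
    exact Set.sdiff_subset
  have hCd : ∀ u v, G.Adj u v → Disjoint (C u) (C v) := by
    intro u v huv
    rcases hadj u v huv with ⟨hu, hv⟩ | ⟨hct, h | h⟩
    · exact (hB3 u v huv).mono (hCfar u hu) (hCfar v hv)
    · exact hCpair u v huv hct h
    · exact (hCpair v u huv.symm hct.symm h).symm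
  have hCone : ∀ v, lev v ≠ 0 → 1 ≤ (colorMeasure r).real (C v) := by
    intro v hv
    obtain ⟨i, hi⟩ := Nat.exists_eq_succ_of_ne_zero hv
    simp only [Nat.succ_eq_add_one] at hi
    simp only [hC, hi]
    set w := ctr v
    have e1 := measureReal_union_add_inter (μ := colorMeasure r) (s := B v \ R w (i + 1))
      (hRm w (i + 2))
    have e2 := measureReal_inter_add_sdiff (μ := colorMeasure r) (s := B v) (hRm w (i + 1))
    have e3 : (colorMeasure r).real ((B v \ R w (i + 1)) ∩ R w (i + 2)) ≤ s (i + 2) / k := by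
      rw [← hBR v w (i + 2)]
      exact measureReal_mono (Set.inter_subset_inter_left _ Set.sdiff_subset)
    rw [hRs] at e1
    rw [hBR, hBr] at e2
    have hk0 : 0 < k := by linarith
    have e4 : 1 ≤ r / k - s (i + 1) / k - s (i + 2) / k + s (i + 2) := by
      have : r / k - s (i + 1) / k - s (i + 2) / k + s (i + 2) - 1 =
          (ε + (k - 1) * s (i + 2) - s (i + 1)) / k := by
        rw [hr]; field_simp; ring
      have h2 : 0 ≤ (ε + (k - 1) * s (i + 2) - s (i + 1)) / k :=
        div_nonneg (by linarith [hsk i]) hk0.le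
      linarith
    change 1 ≤ (colorMeasure r).real ((B v \ R w (i + 1)) ∪ R w (i + 2))
    linarith
  have hF : ∀ v, ∃ F ⊆ C v, MeasurableSet F ∧ volume F = 1 ∧ (v ∈ W → F = P v) := by
    intro v
    by_cases hv : v ∈ W
    · refine ⟨P v, ?_, (hP v hv).2.1, (hP v hv).2.2, fun _ => rfl⟩
      rw [← hP4 v hv, ← hR1]
      simp only [hC, (hlW v hv).1, (hlW v hv).2]
      exact Set.subset_union_right
    · obtain ⟨F, hFC, hFm, hF1, -⟩ := exists_subset_real_eq r (hCm v) zero_le_one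
        (hCone v fun h => hv (hl0 v h))
      refine ⟨F, hFC, hFm, ?_, fun h => (hv h).elim⟩
      rw [colorMeasure_real_of_subset (hFC.trans (hCsub v)), Measure.real] at hF1
      rwa [ENNReal.toReal_eq_one_iff] at hF1
  choose F hFC hFm hF1 hFP using hF
  exact ⟨F, ⟨fun v => (hFC v).trans (hCsub v), hFm, hF1,
    fun u v huv => (hCd u v huv).mono (hFC u) (hFC v)⟩, hFP⟩
end

section
/- Let k be a positive rational with k < 3 and ε a positive real such that ε ≥ 1/(k+1). If G is a fractionally k-colorable graph and W is a subset of its vertex set whose vertices are at pairwise graph distance at least seven, then any fractional (k+ε)-precoloring of W can be extended to a fractional (k+ε)-coloring of G. -/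
/-!
Let `c` be a fractional `k`-coloring of `G` and `r = k + ε`. Since `V` is finite, `c` amounts to a
distribution on independent sets in which every vertex is covered with probability `1/k`
(`FracColorable.exists_weights`). Each colour `y ∈ [0,r)` is given a label: two independent sets
`S₁, S₂` drawn independently from this distribution and a bit that is true with probability
`k/(k+1)`. Finitely many sets are precolored, so the labels can be chosen independent of all of them
at once: each atom of the algebra generated by the precoloring is cut in the right proportions
(`exists_split`).

Far from `W`, a vertex `v` uses the colours with `v ∈ S₁`, of measure `(k+ε)/k ≥ 1`. Because of the
distance condition, the balls of radius three around the vertices of `W` are disjoint, and the only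
edges between two of them join third layers. In the ball around `w ∈ W` the rule is modified as
follows (`Uses`).

* Layer one avoids `P w`, and all of it additionally uses the colours outside `P w` with
  `w ∈ S₁ ∩ S₂`. This is legitimate because `k < 3` excludes triangles, so layer one is independent.
* Layer two gives those additional colours up. For the colours of `P w` with `w ∉ S₁`, `w ∈ S₂` and
  true bit it follows `S₂` in place of `S₁`.
* Layer three does not use the latter colours.

Adjacent vertices never share a colour (`not_uses_both`). If `α` is the measure of `c v ∩ c w`, the
measures obtained in layers two and three are `1 + (ε - 1/(k+1)) (k - α) / k²` and
`1 + (ε - 1/(k+1) + α/(k+1)) / k`, and layer one obtains `(k - 1 + ε)(k + 1)/k²`; all are at least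
one because `ε ≥ 1/(k+1)` (`one_le_mass_uses`). Finally the sets are shrunk to measure one.
-/

open MeasureTheory

/-! ### Splitting sets of reals into pieces of prescribed measure -/

lemma volume_ne_top_of_subset_Ico {J : Set ℝ} {r : ℝ} (hJ : J ⊆ Set.Ico 0 r) :
    volume J ≠ ⊤ :=
  ((measure_mono hJ).trans_lt (by simp)).ne

/-- The function `t ↦ |J ∩ (-∞, t)|` is 1-Lipschitz, so it takes every intermediate value. -/
lemma exists_subset_volume_eq {J : Set ℝ} {r t : ℝ} (hJ : J ⊆ Set.Ico 0 r)
    (hm : MeasurableSet J) (h0 : 0 ≤ t) (ht : t ≤ volume.real J) :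
    ∃ D ⊆ J, MeasurableSet D ∧ volume.real D = t := by
  have hfin := volume_ne_top_of_subset_Ico hJ
  have hlip : LipschitzWith 1 (fun s : ℝ => volume.real (J ∩ Set.Iio s)) := by
    refine LipschitzWith.of_le_add fun a b => ?_
    have hsub : J ∩ Set.Iio a ⊆ (J ∩ Set.Iio b) ∪ Set.Ico b a := by
      rintro y ⟨hy, hya⟩
      by_cases hb : y < b
      · exact Or.inl ⟨hy, hb⟩
      · exact Or.inr ⟨not_lt.1 hb, hya⟩
    have hfb : volume (J ∩ Set.Iio b) ≠ ⊤ :=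
      volume_ne_top_of_subset_Ico (Set.inter_subset_left.trans hJ)
    calc volume.real (J ∩ Set.Iio a)
        ≤ volume.real ((J ∩ Set.Iio b) ∪ Set.Ico b a) :=
          measureReal_mono hsub (measure_union_ne_top hfb (by simp))
      _ ≤ volume.real (J ∩ Set.Iio b) + volume.real (Set.Ico b a) := measureReal_union_le _ _
      _ ≤ volume.real (J ∩ Set.Iio b) + dist a b := by
          gcongr
          rw [Real.volume_real_Ico, Real.dist_eq]
          exact max_le (le_abs_self _) (abs_nonneg _)
  have hlo : volume.real (J ∩ Set.Iio 0) = 0 := by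
    have : J ∩ Set.Iio 0 = ∅ := by
      ext y
      simp only [Set.mem_inter_iff, Set.mem_Iio, Set.mem_empty_iff_false, iff_false, not_and,
        not_lt]
      exact fun hy => (hJ hy).1
    simp [this]
  have hhi : J ∩ Set.Iio r = J := Set.inter_eq_left.2 fun y hy => (hJ hy).2
  obtain ⟨s, hs⟩ := mem_range_of_exists_le_of_exists_ge hlip.continuous
    ⟨0, hlo.trans_le h0⟩ ⟨r, by rw [hhi]; exact ht⟩
  exact ⟨J ∩ Set.Iio s, Set.inter_subset_left, hm.inter measurableSet_Iio, hs⟩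

lemma exists_split_finset {Ω : Type} (p : Ω → ℝ) (hp : ∀ o, 0 ≤ p o) {r : ℝ} (s : Finset Ω) :
    ∀ J : Set ℝ, J ⊆ Set.Ico 0 r → MeasurableSet J → ∑ o ∈ s, p o ≤ volume.real J →
    ∃ D : Ω → Set ℝ, (∀ o, D o ⊆ J) ∧ (∀ o, MeasurableSet (D o)) ∧
      (∀ o o', o ≠ o' → Disjoint (D o) (D o')) ∧ ∀ o ∈ s, volume.real (D o) = p o := by
  classical
  induction s using Finset.induction_on with
  | empty => exact fun J _ _ _ => ⟨fun _ => ∅, by simp, by simp, by simp, by simp⟩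
  | insert a s ha ih =>
    intro J hJ hm hsum
    rw [Finset.sum_insert ha] at hsum
    obtain ⟨A, hAJ, hA, hAv⟩ := exists_subset_volume_eq hJ hm (hp a)
      (by linarith [Finset.sum_nonneg fun o (_ : o ∈ s) => hp o])
    obtain ⟨D, hD1, hD2, hD3, hD4⟩ := ih (J \ A) (Set.sdiff_subset.trans hJ) (hm.diff hA) (by
      rw [measureReal_sdiff hAJ hA (volume_ne_top_of_subset_Ico hJ), hAv]
      linarith)
    have hdA : ∀ o, Disjoint A (D o) := fun o =>
      Set.disjoint_of_subset_right (hD1 o) Set.disjoint_sdiff_right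
    refine ⟨fun o => if o = a then A else D o, fun o => ?_, fun o => ?_, fun o o' hoo => ?_,
      fun o ho => ?_⟩
    · dsimp only
      split_ifs
      · exact hAJ
      · exact (hD1 o).trans Set.sdiff_subset
    · dsimp only
      split_ifs
      · exact hA
      · exact hD2 o
    · dsimp only
      split_ifs with h1 h2 h2
      · exact absurd (h1.trans h2.symm) hoo
      · exact hdA o'
      · exact (hdA o).symm
      · exact hD3 o o' hoo
    · rcases Finset.mem_insert.1 ho with rfl | ho
      · simp [hAv]
      · have : o ≠ a := fun h => ha (h ▸ ho)
        simp [this, hD4 o ho]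

lemma exists_split {Ω : Type} [Fintype Ω] (p : Ω → ℝ) (hp : ∀ o, 0 ≤ p o) (hp1 : ∑ o, p o = 1)
    {r : ℝ} {J : Set ℝ} (hJ : J ⊆ Set.Ico 0 r) (hm : MeasurableSet J) :
    ∃ D : Ω → Set ℝ, (∀ o, D o ⊆ J) ∧ (∀ o, MeasurableSet (D o)) ∧
      (∀ o o', o ≠ o' → Disjoint (D o) (D o')) ∧
      ∀ o, volume.real (D o) = volume.real J * p o := by
  obtain ⟨D, h1, h2, h3, h4⟩ := exists_split_finset (fun o => volume.real J * p o)
    (fun o => mul_nonneg measureReal_nonneg (hp o)) Finset.univ J hJ hm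
    (by rw [← Finset.mul_sum, hp1, mul_one])
  exact ⟨D, h1, h2, h3, fun o => h4 o (Finset.mem_univ o)⟩

/-! ### Atoms of a finite family of sets -/

/-- The points of `[0,r)` that lie in exactly those members of the family `Q` whose index
belongs to `T`. -/
def atomOf {V : Type} (r : ℝ) (Q : V → Set ℝ) (T : Set V) : Set ℝ :=
  {y | y ∈ Set.Ico 0 r ∧ {v | y ∈ Q v} = T}

lemma atomOf_subset {V : Type} (r : ℝ) (Q : V → Set ℝ) (T : Set V) :
    atomOf r Q T ⊆ Set.Ico 0 r := fun _ hy => hy.1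

lemma measurableSet_atomOf {V : Type} [Fintype V] (r : ℝ) {Q : V → Set ℝ}
    (hQ : ∀ v, MeasurableSet (Q v)) (T : Set V) : MeasurableSet (atomOf r Q T) := by
  classical
  have : atomOf r Q T = Set.Ico 0 r ∩ ⋂ v, (if v ∈ T then Q v else (Q v)ᶜ) := by
    ext y
    simp only [atomOf, Set.mem_ofPred_eq, Set.mem_inter_iff, Set.mem_iInter, Set.ext_iff]
    refine and_congr_right fun _ => forall_congr' fun v => ?_
    split_ifs with h <;> simp [h]
  rw [this]
  refine measurableSet_Ico.inter (MeasurableSet.iInter fun v => ?_)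
  split_ifs
  · exact hQ v
  · exact (hQ v).compl

lemma disjoint_atomOf {V : Type} (r : ℝ) (Q : V → Set ℝ) {T T' : Set V} (h : T ≠ T') :
    Disjoint (atomOf r Q T) (atomOf r Q T') :=
  Set.disjoint_left.2 fun _ h1 h2 => h (h1.2.symm.trans h2.2)

open Classical in
lemma sum_atomOf {V : Type} [Fintype V] {r : ℝ} (hr : 0 ≤ r) {Q : V → Set ℝ}
    (hQ : ∀ v, MeasurableSet (Q v)) : ∑ T : Set V, volume.real (atomOf r Q T) = r := by
  rw [← measureReal_iUnion_fintype (fun T T' h => disjoint_atomOf r Q h)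
    (measurableSet_atomOf r hQ) fun T => volume_ne_top_of_subset_Ico (atomOf_subset r Q T)]
  have : (⋃ T : Set V, atomOf r Q T) = Set.Ico 0 r := by
    ext y
    simp [atomOf]
  rw [this, Real.volume_real_Ico_of_le hr, sub_zero]

open Classical in
lemma sum_atomOf_mem {V : Type} [Fintype V] {r : ℝ} {Q : V → Set ℝ}
    (hQ : ∀ v, MeasurableSet (Q v)) {v : V} (hv : Q v ⊆ Set.Ico 0 r) :
    ∑ T : Set V, volume.real (atomOf r Q T) * (if v ∈ T then 1 else 0) = volume.real (Q v) := by
  have hU : (⋃ T : Set V, if v ∈ T then atomOf r Q T else ∅) = Q v := by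
    ext y
    simp only [Set.mem_iUnion]
    constructor
    · rintro ⟨T, hT⟩
      split_ifs at hT with h
      · have := hT.2
        rw [← this] at h
        exact h
      · exact hT.elim
    · intro hy
      refine ⟨{v | y ∈ Q v}, ?_⟩
      rw [if_pos (show v ∈ {v | y ∈ Q v} from hy)]
      exact ⟨hv hy, rfl⟩
  rw [← hU, measureReal_iUnion_fintype (h' := ?_)]
  · refine Finset.sum_congr rfl fun T _ => ?_
    split_ifs <;> simp
  · intro T T' h
    simp only [Function.onFun]
    split_ifs
    · exact disjoint_atomOf r Q h
    all_goals simp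
  · intro T
    split_ifs
    · exact measurableSet_atomOf r hQ T
    · exact MeasurableSet.empty
  · intro T
    split_ifs
    · exact volume_ne_top_of_subset_Ico (atomOf_subset r Q T)
    · simp

open Classical in
/-- A fractional `k`-coloring yields a finite family of independent sets `S i` with weights
`m i` of total weight `k` such that every vertex is covered with total weight one. -/
lemma FracColorable.exists_weights {V : Type} [Fintype V] {G : SimpleGraph V} {k : ℝ}
    (hk : 0 ≤ k) (hG : FracColorable G k) :
    ∃ (m : Set V → ℝ) (S : Set V → Set V), (∀ i, 0 ≤ m i) ∧ ∑ i, m i = k ∧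
      (∀ i u v, G.Adj u v → u ∈ S i → v ∉ S i) ∧
      ∀ v, ∑ i, m i * (if v ∈ S i then 1 else 0) = 1 := by
  obtain ⟨c, hc1, hc2, hc3, hc4⟩ := hG
  refine ⟨fun T => volume.real (atomOf k c T), fun T => {v | v ∈ T ∧ (atomOf k c T).Nonempty},
    fun _ => measureReal_nonneg, sum_atomOf hk hc2, ?_, fun v => ?_⟩
  · rintro T u v huv ⟨hu, y, hy⟩ ⟨hv, -⟩
    rw [← hy.2] at hu hv
    exact Set.disjoint_left.1 (hc4 u v huv) hu hv
  · have h1 : volume.real (c v) = 1 := by simp [Measure.real, hc3 v]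
    refine Eq.trans (Finset.sum_congr rfl fun T _ => ?_) ((sum_atomOf_mem hc2 (hc1 v)).trans h1)
    rcases (atomOf k c T).eq_empty_or_nonempty with h | h <;> simp [h]

/-! ### Layers around the precolored vertices -/

/-- `lay v` is the distance of `v` from `W`, truncated at `4`, and `ctr v` is a nearest vertex of
`W` when that distance is at most three. -/
lemma exists_layers {V : Type} {G : SimpleGraph V} {W : Set V} (hW : DistAtLeast G 7 W) :
    ∃ (lay : V → ℕ) (ctr : V → V), (∀ v, lay v ≤ 4) ∧ (∀ v, lay v ≤ 3 → ctr v ∈ W) ∧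
      (∀ v, v ∈ W ↔ lay v = 0) ∧ (∀ v, lay v = 0 → ctr v = v) ∧
      (∀ v, lay v = 1 → G.Adj (ctr v) v) ∧ (∀ u v, G.Adj u v → lay u ≤ lay v + 1) ∧
      ∀ u v, G.Adj u v → lay u ≤ 3 → lay v ≤ 3 → lay u + lay v ≤ 5 → ctr u = ctr v := by
  classical
  let N : V → Set ℕ := fun v => {n | n = 4 ∨ ∃ w ∈ W, ∃ p : G.Walk w v, p.length = n}
  have hmem : ∀ v, sInf (N v) ∈ N v := fun v => Nat.sInf_mem ⟨4, Or.inl rfl⟩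
  have hle : ∀ v, sInf (N v) ≤ 4 := fun v => Nat.sInf_le (Or.inl rfl)
  have hctr : ∀ v, ∃ w, sInf (N v) ≤ 3 → w ∈ W ∧ ∃ p : G.Walk w v, p.length = sInf (N v) := by
    intro v
    rcases hmem v with h | ⟨w, hw, p, hp⟩
    · exact ⟨v, fun h' => by omega⟩
    · exact ⟨w, fun _ => ⟨hw, p, hp⟩⟩
  choose ctr hctr using hctr
  have h0 : ∀ v, sInf (N v) = 0 → ctr v = v := by
    intro v hv
    obtain ⟨-, p, hp⟩ := hctr v (by omega)
    exact SimpleGraph.Walk.eq_of_length_eq_zero (hp.trans hv)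
  refine ⟨fun v => sInf (N v), ctr, hle, fun v h => (hctr v h).1, fun v => ⟨fun hv => ?_,
    fun hv => ?_⟩, h0, fun v hv => ?_, fun u v huv => ?_, fun u v huv hu hv huv5 => ?_⟩
  · exact Nat.le_zero.1 (Nat.sInf_le (Or.inr ⟨v, hv, SimpleGraph.Walk.nil, rfl⟩))
  · have := (hctr v (by dsimp only at hv; omega)).1
    rwa [h0 v hv] at this
  · obtain ⟨-, p, hp⟩ := hctr v (by dsimp only at hv; omega)
    exact SimpleGraph.Walk.adj_of_length_eq_one (hp.trans hv)
  · by_cases h3 : sInf (N v) ≤ 3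
    · obtain ⟨hw, p, hp⟩ := hctr v h3
      exact Nat.sInf_le (Or.inr ⟨ctr v, hw, p.concat huv.symm, by simp [hp]⟩)
    · have := hle u
      dsimp only
      omega
  · obtain ⟨hwu, p, hp⟩ := hctr u hu
    obtain ⟨hwv, q, hq⟩ := hctr v hv
    by_contra hne
    have := hW _ hwu _ hwv hne (p.append (SimpleGraph.Walk.cons huv q.reverse))
    simp only [SimpleGraph.Walk.length_append, SimpleGraph.Walk.length_cons,
      SimpleGraph.Walk.length_reverse] at this
    dsimp only at huv5
    omega

/-! ### The local rule and its mass in each layer -/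

/-- Which vertices receive a colour `y`. The vertex `v` is in layer `n` around `w`, and the colour
carries two independent sets `S₁`, `S₂` and a bit `b`; the propositions `r, x₁, y₁, x₂, y₂` stand
for `y ∈ P w`, `v ∈ S₁`, `w ∈ S₁`, `v ∈ S₂`, `w ∈ S₂`. -/
def Uses : ℕ → (r x₁ y₁ x₂ y₂ b : Prop) → Prop
  | 0, r, _, _, _, _, _ => r
  | 1, r, x₁, y₁, _, y₂, _ => ¬r ∧ (x₁ ∨ (y₁ ∧ y₂))
  | 2, r, x₁, y₁, x₂, y₂, b =>
      (r ∧ (¬y₁ ∧ y₂ ∧ b) ∧ x₂) ∨ (r ∧ ¬(¬y₁ ∧ y₂ ∧ b) ∧ x₁) ∨ (¬r ∧ x₁ ∧ ¬(y₁ ∧ y₂))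
  | 3, r, x₁, y₁, _, y₂, b => x₁ ∧ ¬(r ∧ ¬y₁ ∧ y₂ ∧ b)
  | _, _, x₁, _, _, _, _ => x₁

/-- The weight of the triple (first set, second set, bit): the two sets are drawn independently
with probabilities `m / k`, and the bit is true with probability `k / (k + 1)`. -/
noncomputable def labelWeight {ι : Type} (k : ℝ) (m : ι → ℝ) (o : ι × ι × Bool) : ℝ :=
  m o.1 / k * (m o.2.1 / k) * (if o.2.2 then k / (k + 1) else 1 / (k + 1))

/-- The integral of `F` over the colour space, expressed through the weights `n` of the atoms of
the precoloring and the independent labels. -/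
noncomputable def mass {ρ ι : Type} [Fintype ρ] [Fintype ι] (k : ℝ) (n : ρ → ℝ) (m : ι → ℝ)
    (F : ρ → ι → ι → Bool → ℝ) : ℝ :=
  ∑ q : ρ × ι × ι × Bool, n q.1 * labelWeight k m q.2 * F q.1 q.2.1 q.2.2.1 q.2.2.2

section mass

variable {ρ ι : Type} [Fintype ρ] [Fintype ι] (k : ℝ) (n : ρ → ℝ) (m : ι → ℝ)

lemma mass_add (F F' : ρ → ι → ι → Bool → ℝ) :
    mass k n m (fun R i j b => F R i j b + F' R i j b) = mass k n m F + mass k n m F' := by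
  simp only [mass, mul_add, Finset.sum_add_distrib]

lemma mass_sub (F F' : ρ → ι → ι → Bool → ℝ) :
    mass k n m (fun R i j b => F R i j b - F' R i j b) = mass k n m F - mass k n m F' := by
  simp only [mass, mul_sub, Finset.sum_sub_distrib]

lemma mass_mul (f : ρ → ℝ) (g h : ι → ℝ) (q : Bool → ℝ) :
    mass k n m (fun R i j b => f R * g i * h j * q b) =
      (∑ R, n R * f R) * ((∑ i, m i * g i) / k) * ((∑ j, m j * h j) / k) *
        (k / (k + 1) * q true + 1 / (k + 1) * q false) := by
  have hb : k / (k + 1) * q true + 1 / (k + 1) * q false =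
      ∑ b : Bool, (if b then k / (k + 1) else 1 / (k + 1)) * q b := by simp
  rw [hb, Finset.sum_div, Finset.sum_div, mul_assoc, mul_assoc]
  simp only [Finset.sum_mul_sum]
  simp only [mass, labelWeight, Fintype.sum_prod_type, Finset.mul_sum]
  refine Finset.sum_congr rfl fun R _ => Finset.sum_congr rfl fun i _ =>
    Finset.sum_congr rfl fun j _ => Finset.sum_congr rfl fun b _ => ?_
  ring

lemma sum_labelWeight (hk : 0 < k) (hm : ∑ i, m i = k) : ∑ o, labelWeight k m o = 1 := by
  have h := mass_mul k (fun _ : Unit => 1) m (fun _ => 1) (fun _ => 1) (fun _ => 1) (fun _ => 1)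
  simp only [mass, Fintype.sum_prod_type, mul_one, one_mul, hm] at h
  simp only [Finset.univ_unique, Finset.sum_singleton] at h
  simp only [Fintype.sum_prod_type]
  rw [h]
  field_simp

end mass

open Classical in
lemma uses_one_indicator (r x₁ y₁ x₂ y₂ b : Prop) (h : x₁ → ¬y₁) :
    (if Uses 1 r x₁ y₁ x₂ y₂ b then 1 else 0 : ℝ) =
      (1 - if r then 1 else 0) * (if x₁ then 1 else 0) * 1 * 1 +
        (1 - if r then 1 else 0) * (if y₁ then 1 else 0) * (if y₂ then 1 else 0) * 1 := by
  by_cases hr : r <;> by_cases hx : x₁ <;> by_cases hy : y₁ <;> by_cases hy' : y₂ <;>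
    simp_all [Uses]

open Classical in
lemma uses_two_indicator (r x₁ y₁ x₂ y₂ b : Prop) :
    (if Uses 2 r x₁ y₁ x₂ y₂ b then 1 else 0 : ℝ) =
      1 * (if x₁ then 1 else 0) * 1 * 1 -
        (if r then 1 else 0) * ((if x₁ then 1 else 0) * (1 - if y₁ then 1 else 0)) *
          (if y₂ then 1 else 0) * (if b then 1 else 0) +
        (if r then 1 else 0) * (1 - if y₁ then 1 else 0) *
          ((if x₂ then 1 else 0) * if y₂ then 1 else 0) * (if b then 1 else 0) -
        (1 - if r then 1 else 0) * ((if x₁ then 1 else 0) * if y₁ then 1 else 0) *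
          (if y₂ then 1 else 0) * 1 := by
  by_cases hr : r <;> by_cases hx : x₁ <;> by_cases hy : y₁ <;> by_cases hy' : y₂ <;>
    by_cases hx' : x₂ <;> by_cases hb : b <;> simp [Uses, *]

open Classical in
lemma uses_three_indicator (r x₁ y₁ x₂ y₂ b : Prop) :
    (if Uses 3 r x₁ y₁ x₂ y₂ b then 1 else 0 : ℝ) =
      1 * (if x₁ then 1 else 0) * 1 * 1 -
        (if r then 1 else 0) * ((if x₁ then 1 else 0) * (1 - if y₁ then 1 else 0)) *
          (if y₂ then 1 else 0) * (if b then 1 else 0) := by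
  by_cases hr : r <;> by_cases hx : x₁ <;> by_cases hy : y₁ <;> by_cases hy' : y₂ <;>
    by_cases hb : b <;> simp [Uses, *]

open Classical in
/-- The rule gives every vertex outside `W` mass at least one. In layer two the bound is
an equality when `ε = 1/(k+1)`. -/
lemma one_le_mass_uses {V ρ ι : Type} [Fintype ρ] [Fintype ι] {k ε : ℝ} (hk : 1 ≤ k)
    (hε : 1 / (k + 1) ≤ ε) {n : ρ → ℝ} {m : ι → ℝ} (hm : ∀ i, 0 ≤ m i) (A : ρ → Set V)
    (S : ι → Set V) (hn : ∑ R, n R = k + ε) (hmk : ∑ i, m i = k)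
    (hS : ∀ v, ∑ i, m i * (if v ∈ S i then 1 else 0) = 1) {l : ℕ} (hl : 1 ≤ l) (v w : V)
    (hA : l ≤ 3 → ∑ R, n R * (if w ∈ A R then 1 else 0) = 1)
    (h1 : l = 1 → ∀ i, v ∈ S i → w ∉ S i) :
    1 ≤ mass k n m (fun R i j b =>
      if Uses l (w ∈ A R) (v ∈ S i) (w ∈ S i) (v ∈ S j) (w ∈ S j) (b = true) then 1 else 0) := by
  set r : ρ → ℝ := fun R => if w ∈ A R then 1 else 0 with hr
  set x : ι → ℝ := fun i => if v ∈ S i then 1 else 0 with hx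
  set y : ι → ℝ := fun i => if w ∈ S i then 1 else 0 with hy
  set β : Bool → ℝ := fun b => if b = true then 1 else 0 with hβ
  have hk0 : 0 < k := by linarith
  have hk1 : 0 < k + 1 := by linarith
  have hεk : 1 ≤ ε * (k + 1) := by rwa [div_le_iff₀ hk1] at hε
  have sx : ∑ i, m i * x i = 1 := hS v
  have sy : ∑ i, m i * y i = 1 := hS w
  -- the common weight of `v` and `w`
  obtain ⟨α, sxy⟩ : ∃ α, ∑ i, m i * (x i * y i) = α := ⟨_, rfl⟩
  have hα0 : 0 ≤ α := by
    rw [← sxy]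
    refine Finset.sum_nonneg fun i _ => mul_nonneg (hm i) ?_
    simp only [hx, hy]
    split_ifs <;> norm_num
  have hα1 : α ≤ 1 := by
    rw [← sxy, ← sx]
    refine Finset.sum_le_sum fun i _ => mul_le_mul_of_nonneg_left ?_ (hm i)
    simp only [hx, hy]
    split_ifs <;> norm_num
  have sy' : ∑ i, m i * (1 - y i) = k - 1 := by
    simp only [mul_sub, Finset.sum_sub_distrib, mul_one, hmk, sy]
  have sxy' : ∑ i, m i * (x i * (1 - y i)) = 1 - α := by
    simp only [mul_sub, Finset.sum_sub_distrib, mul_one, sx, sxy]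
  by_cases h4 : 4 ≤ l
  · have hF : (fun (R : ρ) (i j : ι) (b : Bool) => (if Uses l (w ∈ A R) (v ∈ S i) (w ∈ S i)
        (v ∈ S j) (w ∈ S j) (b = true) then 1 else 0 : ℝ)) = fun R i j b => 1 * x i * 1 * 1 := by
      obtain ⟨l, rfl⟩ := Nat.exists_eq_add_of_le' h4
      funext R i j b
      simp [Uses, hx]
    rw [hF, mass_mul k n m (fun _ => 1) x (fun _ => 1) (fun _ => 1)]
    simp only [mul_one, hn, hmk, sx]
    field_simp
    nlinarith
  have hl3 : l ≤ 3 := by omega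
  have sr : ∑ R, n R * r R = 1 := hA hl3
  have sr' : ∑ R, n R * (1 - r R) = k + ε - 1 := by
    simp only [mul_sub, Finset.sum_sub_distrib, mul_one, hn, sr]
  interval_cases l
  · have hF : (fun (R : ρ) (i j : ι) (b : Bool) => (if Uses 1 (w ∈ A R) (v ∈ S i) (w ∈ S i)
        (v ∈ S j) (w ∈ S j) (b = true) then 1 else 0 : ℝ)) =
        fun R i j b => (1 - r R) * x i * 1 * 1 + (1 - r R) * y i * y j * 1 := by
      funext R i j b
      exact uses_one_indicator _ _ _ _ _ _ (h1 rfl i)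
    rw [hF, mass_add, mass_mul k n m (fun R => 1 - r R) x (fun _ => 1) (fun _ => 1),
      mass_mul k n m (fun R => 1 - r R) y y (fun _ => 1)]
    simp only [mul_one, hmk, sx, sy, sr']
    field_simp
    nlinarith
  · have hF : (fun (R : ρ) (i j : ι) (b : Bool) => (if Uses 2 (w ∈ A R) (v ∈ S i) (w ∈ S i)
        (v ∈ S j) (w ∈ S j) (b = true) then 1 else 0 : ℝ)) =
        fun R i j b => 1 * x i * 1 * 1 - r R * (x i * (1 - y i)) * y j * β b +
          r R * (1 - y i) * (x j * y j) * β b - (1 - r R) * (x i * y i) * y j * 1 := by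
      funext R i j b
      convert uses_two_indicator (w ∈ A R) (v ∈ S i) (w ∈ S i) (v ∈ S j) (w ∈ S j) (b = true)
    rw [hF, mass_sub, mass_add, mass_sub, mass_mul k n m (fun _ => 1) x (fun _ => 1) (fun _ => 1),
      mass_mul k n m r (fun i => x i * (1 - y i)) y β,
      mass_mul k n m r (fun i => 1 - y i) (fun j => x j * y j) β,
      mass_mul k n m (fun R => 1 - r R) (fun i => x i * y i) y (fun _ => 1)]
    simp only [mul_one, hn, hmk, sx, sy, sr, sr', sxy, sxy', sy']
    simp only [hβ, if_true, Bool.false_eq_true, if_false, mul_one, mul_zero, add_zero]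
    have hid : (k + ε) * (1 / k) * (k / k) * (k / (k + 1) + 1 / (k + 1)) -
        1 * ((1 - α) / k) * (1 / k) * (k / (k + 1)) +
        1 * ((k - 1) / k) * (α / k) * (k / (k + 1)) -
        (k + ε - 1) * (α / k) * (1 / k) * (k / (k + 1) + 1 / (k + 1)) =
        1 + (ε - 1 / (k + 1)) * (k - α) / k ^ 2 := by
      field_simp
      ring
    rw [hid]
    have : 0 ≤ (ε - 1 / (k + 1)) * (k - α) / k ^ 2 :=
      div_nonneg (mul_nonneg (by linarith) (by linarith)) (by positivity)
    linarith
  · have hF : (fun (R : ρ) (i j : ι) (b : Bool) => (if Uses 3 (w ∈ A R) (v ∈ S i) (w ∈ S i)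
        (v ∈ S j) (w ∈ S j) (b = true) then 1 else 0 : ℝ)) =
        fun R i j b => 1 * x i * 1 * 1 - r R * (x i * (1 - y i)) * y j * β b := by
      funext R i j b
      convert uses_three_indicator (w ∈ A R) (v ∈ S i) (w ∈ S i) (v ∈ S j) (w ∈ S j) (b = true)
    rw [hF, mass_sub, mass_mul k n m (fun _ => 1) x (fun _ => 1) (fun _ => 1),
      mass_mul k n m r (fun i => x i * (1 - y i)) y β]
    simp only [mul_one, hn, hmk, sx, sy, sr, sxy']
    simp only [hβ, if_true, Bool.false_eq_true, if_false, mul_one, mul_zero, add_zero]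
    have hid : (k + ε) * (1 / k) * (k / k) * (k / (k + 1) + 1 / (k + 1)) -
        1 * ((1 - α) / k) * (1 / k) * (k / (k + 1)) =
        1 + (ε - 1 / (k + 1) + α / (k + 1)) / k := by
      field_simp
      ring
    rw [hid]
    have : 0 ≤ (ε - 1 / (k + 1) + α / (k + 1)) / k :=
      div_nonneg (add_nonneg (by linarith) (by positivity)) hk0.le
    linarith

lemma uses_one_two_disjoint {r x₁ x₁' y₁ x₂ x₂' y₂ b : Prop} (h : x₁ → ¬x₁')
    (hu : Uses 1 r x₁ y₁ x₂ y₂ b) (hv : Uses 2 r x₁' y₁ x₂' y₂ b) : False := by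
  simp only [Uses] at hu hv
  grind

lemma uses_two_two_disjoint {r x₁ x₁' y₁ x₂ x₂' y₂ b : Prop} (h : x₁ → ¬x₁') (h' : x₂ → ¬x₂')
    (hu : Uses 2 r x₁ y₁ x₂ y₂ b) (hv : Uses 2 r x₁' y₁ x₂' y₂ b) : False := by
  simp only [Uses] at hu hv
  grind

lemma uses_two_three_disjoint {r x₁ x₁' y₁ x₂ x₂' y₂ b : Prop} (h : x₁ → ¬x₁')
    (hu : Uses 2 r x₁ y₁ x₂ y₂ b) (hv : Uses 3 r x₁' y₁ x₂' y₂ b) : False := by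
  simp only [Uses] at hu hv
  grind

/-- Adjacent vertices never use the same colour. The hypotheses are those provided by
`exists_layers`, together with the absence of triangles, which makes layer one independent. -/
lemma not_uses_both {V : Type} {G : SimpleGraph V} {lay : V → ℕ} {ctr : V → V}
    (h4 : ∀ v, lay v ≤ 4) (h0 : ∀ v, lay v = 0 → ctr v = v)
    (h1 : ∀ v, lay v = 1 → G.Adj (ctr v) v) (hadj : ∀ u v, G.Adj u v → lay u ≤ lay v + 1)
    (hctr : ∀ u v, G.Adj u v → lay u ≤ 3 → lay v ≤ 3 → lay u + lay v ≤ 5 → ctr u = ctr v)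
    (htri : ∀ u v w, G.Adj u v → G.Adj w u → ¬G.Adj w v)
    {R S₁ S₂ : Set V} {b : Prop} (hS₁ : ∀ u v, G.Adj u v → u ∈ S₁ → v ∉ S₁)
    (hS₂ : ∀ u v, G.Adj u v → u ∈ S₂ → v ∉ S₂) {u v : V} (huv : G.Adj u v)
    (hu : Uses (lay u) (ctr u ∈ R) (u ∈ S₁) (ctr u ∈ S₁) (u ∈ S₂) (ctr u ∈ S₂) b)
    (hv : Uses (lay v) (ctr v ∈ R) (v ∈ S₁) (ctr v ∈ S₁) (v ∈ S₂) (ctr v ∈ S₂) b) : False := by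
  wlog hle : lay u ≤ lay v generalizing u v
  · exact this huv.symm hv hu (by omega)
  have hle' := hadj v u huv.symm
  have h4v := h4 v
  have i1 := hS₁ u v huv
  have i2 := hS₂ u v huv
  have key := hctr u v huv
  obtain ⟨a, ha⟩ : ∃ a, lay u = a := ⟨_, rfl⟩
  obtain ⟨c, hc⟩ : ∃ c, lay v = c := ⟨_, rfl⟩
  have t0u := h0 u
  have t0v := h0 v
  have t1u := h1 u
  have t1v := h1 v
  rw [ha] at hu hle hle' key t0u t1u
  rw [hc] at hv hle hle' key h4v t0v t1v
  have hcases : (a = 0 ∧ c = 0) ∨ (a = 0 ∧ c = 1) ∨ (a = 1 ∧ c = 1) ∨ (a = 1 ∧ c = 2) ∨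
      (a = 2 ∧ c = 2) ∨ (a = 2 ∧ c = 3) ∨ (a = 3 ∧ c = 3) ∨ (a = 3 ∧ c = 4) ∨
      (a = 4 ∧ c = 4) := by omega
  rcases hcases with ⟨rfl, rfl⟩ | ⟨rfl, rfl⟩ | ⟨rfl, rfl⟩ | ⟨rfl, rfl⟩ | ⟨rfl, rfl⟩ | ⟨rfl, rfl⟩ |
    ⟨rfl, rfl⟩ | ⟨rfl, rfl⟩ | ⟨rfl, rfl⟩
  · have e := key (by norm_num) (by norm_num) (by norm_num)
    rw [t0u rfl, t0v rfl] at e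
    exact huv.ne e
  · have e := key (by norm_num) (by norm_num) (by norm_num)
    simp only [Uses] at hu hv
    rw [e] at hu
    exact hv.1 hu
  · have e := key (by norm_num) (by norm_num) (by norm_num)
    have := t1u rfl
    rw [e] at this
    exact htri u v _ huv this (t1v rfl)
  · rw [key (by norm_num) (by norm_num) (by norm_num)] at hu
    exact uses_one_two_disjoint i1 hu hv
  · rw [key (by norm_num) (by norm_num) (by norm_num)] at hu
    exact uses_two_two_disjoint i1 i2 hu hv
  · rw [key (by norm_num) (by norm_num) (by norm_num)] at hu
    exact uses_two_three_disjoint i1 hu hv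
  · exact i1 hu.1 hv.1
  · exact i1 hu.1 hv
  · exact i1 hu hv

open Classical in
/-- Each `S i` contains at most one vertex of a triangle, so a triangle would force `3 ≤ k`. -/
lemma triangle_free_of_weights {V : Type} {ι : Type} [Fintype ι] {G : SimpleGraph V} {k : ℝ}
    (hk : k < 3) {m : ι → ℝ} {S : ι → Set V} (hm : ∀ i, 0 ≤ m i) (hmk : ∑ i, m i = k)
    (hind : ∀ i u v, G.Adj u v → u ∈ S i → v ∉ S i)
    (hS : ∀ v, ∑ i, m i * (if v ∈ S i then 1 else 0) = 1) (u v w : V) (huv : G.Adj u v)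
    (hwu : G.Adj w u) : ¬G.Adj w v := by
  intro hwv
  have h3 : ∑ i, m i * ((if u ∈ S i then 1 else 0) + (if v ∈ S i then 1 else 0) +
      (if w ∈ S i then 1 else 0)) = 3 := by
    simp only [mul_add, Finset.sum_add_distrib, hS]
    norm_num
  have hle : ∑ i, m i * ((if u ∈ S i then 1 else 0) + (if v ∈ S i then 1 else 0) +
      (if w ∈ S i then 1 else 0)) ≤ ∑ i, m i := by
    refine Finset.sum_le_sum fun i _ => mul_le_of_le_one_right (hm i) ?_
    have a := hind i u v huv
    have b := hind i w u hwu
    have c := hind i w v hwv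
    by_cases hu : u ∈ S i <;> by_cases hv : v ∈ S i <;> by_cases hw : w ∈ S i <;> simp_all
  linarith

/-! ### The extension theorem -/

/-- Extension theorem for distance seven when `ε ≥ 1/(k+1)`. -/
theorem extend_d7 (k : ℚ) (hk0 : 0 < k) (hk : k < 3) (ε : ℝ) (hε : 0 < ε)
    (h : 1 / ((k : ℝ) + 1) ≤ ε)
    (V : Type) [Fintype V] (G : SimpleGraph V) (W : Set V)
    (hG : FracColorable G (k : ℝ)) (hW : DistAtLeast G 7 W)
    (P : V → Set ℝ) (hP : IsFracPrecoloring ((k : ℝ) + ε) W P) :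
    ∃ c, IsFracColoring G ((k : ℝ) + ε) c ∧ ∀ w ∈ W, c w = P w := by
  classical
  have hkpos : (0 : ℝ) < (k : ℝ) := by exact_mod_cast hk0
  have hk3 : (k : ℝ) < 3 := by exact_mod_cast hk
  generalize (k : ℝ) = κ at *
  obtain ⟨m, S, hm, hmk, hind, hS⟩ := hG.exists_weights hkpos.le
  have htri := triangle_free_of_weights hk3 hm hmk hind hS
  obtain ⟨lay, ctr, h4, hctrW, hlayW, h0, h1, hadj, hctr⟩ := exists_layers hW
  set r : ℝ := κ + ε with hr
  -- The colour space `[0,r)` is cut into the atoms of the precoloring.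
  set Q : V → Set ℝ := fun v => if v ∈ W then P v else ∅ with hQ
  have hQm : ∀ v, MeasurableSet (Q v) := by
    intro v
    simp only [hQ]
    split_ifs with hv
    · exact (hP v hv).2.1
    · exact MeasurableSet.empty
  have hQW : ∀ w ∈ W, Q w = P w := fun w hw => if_pos hw
  set n : Set V → ℝ := fun R => volume.real (atomOf r Q R) with hn
  have hnr : ∑ R, n R = κ + ε := sum_atomOf (by linarith) hQm
  have hnW : ∀ w ∈ W, ∑ R, n R * (if w ∈ R then 1 else 0) = 1 := by
    intro w hw
    have hsub : Q w ⊆ Set.Ico 0 r := by rw [hQW w hw]; exact (hP w hw).1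
    rw [hn, sum_atomOf_mem hQm hsub, hQW w hw, Measure.real, (hP w hw).2.2, ENNReal.toReal_one]
  -- Every atom is cut into pieces that realize the label distribution inside that atom, so the
  -- labels are independent of the precoloring.
  have hpnn : ∀ o, 0 ≤ labelWeight κ m o := by
    intro o
    have h1 := hm o.1
    have h2 := hm o.2.1
    unfold labelWeight
    split_ifs <;> positivity
  choose D hD1 hD2 hD3 hD4 using fun R => exists_split (labelWeight κ m) hpnn
    (sum_labelWeight κ m hkpos hmk) (atomOf_subset r Q R) (measurableSet_atomOf r hQm R)
  have hDsub : ∀ R o, D R o ⊆ Set.Ico 0 r := fun R o => (hD1 R o).trans (atomOf_subset r Q R)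
  have hDdisj : ∀ q q' : Set V × Set V × Set V × Bool, q ≠ q' →
      Disjoint (D q.1 q.2) (D q'.1 q'.2) := by
    rintro ⟨R, o⟩ ⟨R', o'⟩ hne
    by_cases hR : R = R'
    · subst hR
      exact hD3 R o o' fun ho => hne (by rw [ho])
    · exact Set.disjoint_of_subset (hD1 R o) (hD1 R' o') (disjoint_atomOf r Q hR)
  let U : V → Set V × Set V × Set V × Bool → Prop := fun v q =>
    Uses (lay v) (ctr v ∈ q.1) (v ∈ S q.2.1) (ctr v ∈ S q.2.1) (v ∈ S q.2.2.1)
      (ctr v ∈ S q.2.2.1) (q.2.2.2 = true)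
  have hUdisj : ∀ u v q, G.Adj u v → U u q → U v q → False := fun u v q huv hu hv =>
    not_uses_both h4 h0 h1 hadj hctr htri (hind _) (hind _) huv hu hv
  let E : V → Set ℝ := fun v => ⋃ q, if U v q then D q.1 q.2 else ∅
  have hEmem : ∀ v y, y ∈ E v → ∃ q, U v q ∧ y ∈ D q.1 q.2 := by
    intro v y hy
    obtain ⟨q, hq⟩ := Set.mem_iUnion.1 hy
    by_cases hU : U v q
    · rw [if_pos hU] at hq
      exact ⟨q, hU, hq⟩
    · rw [if_neg hU] at hq
      exact hq.elim
  have hEsub : ∀ v, E v ⊆ Set.Ico 0 r := by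
    intro v y hy
    obtain ⟨q, -, hq⟩ := hEmem v y hy
    exact hDsub _ _ hq
  have hEm : ∀ v, MeasurableSet (E v) := by
    intro v
    refine MeasurableSet.iUnion fun q => ?_
    split_ifs
    · exact hD2 _ _
    · exact MeasurableSet.empty
  have hEvol : ∀ v, volume.real (E v) = mass κ n m (fun R i j b =>
      if Uses (lay v) (ctr v ∈ R) (v ∈ S i) (ctr v ∈ S i) (v ∈ S j) (ctr v ∈ S j) (b = true)
        then 1 else 0) := by
    intro v
    simp only [E, mass]
    rw [measureReal_iUnion_fintype (h' := ?_)]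
    · refine Finset.sum_congr rfl fun q _ => ?_
      by_cases hU : U v q
      · rw [if_pos hU, hD4, if_pos (show Uses _ _ _ _ _ _ _ from hU), mul_one]
      · rw [if_neg hU, if_neg (show ¬Uses _ _ _ _ _ _ _ from hU), mul_zero, measureReal_empty]
    · intro q q' hne
      simp only [Function.onFun]
      split_ifs
      · exact hDdisj q q' hne
      all_goals simp
    · intro q
      split_ifs
      · exact hD2 _ _
      · exact MeasurableSet.empty
    · intro q
      split_ifs
      · exact volume_ne_top_of_subset_Ico (hDsub _ _)
      · simp
  have hE1 : ∀ v, v ∉ W → 1 ≤ volume.real (E v) := by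
    intro v hv
    have hκ1 : 1 ≤ κ := by
      rw [← hS v, ← hmk]
      refine Finset.sum_le_sum fun i _ => mul_le_of_le_one_right (hm i) ?_
      split_ifs <;> norm_num
    rw [hEvol]
    refine one_le_mass_uses hκ1 h hm (fun R => R) S hnr hmk hS ?_ v (ctr v)
      (fun hl => hnW _ (hctrW v hl)) fun hl i hvi => hind i v _ (h1 v hl).symm hvi
    exact Nat.one_le_iff_ne_zero.2 fun hl => hv ((hlayW v).2 hl)
  -- Outside `W`, the sets are cut down to measure exactly one.
  have hC : ∀ v, ∃ C : Set ℝ, C ⊆ Set.Ico 0 r ∧ MeasurableSet C ∧ volume C = 1 ∧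
      (v ∈ W → C = P v) ∧ (v ∉ W → C ⊆ E v) := by
    intro v
    by_cases hv : v ∈ W
    · exact ⟨P v, (hP v hv).1, (hP v hv).2.1, (hP v hv).2.2, fun _ => rfl, fun h => absurd hv h⟩
    · obtain ⟨C, hCE, hCm, hC1⟩ := exists_subset_volume_eq (hEsub v) (hEm v) zero_le_one (hE1 v hv)
      refine ⟨C, hCE.trans (hEsub v), hCm, ?_, fun h => absurd h hv, fun _ => hCE⟩
      rw [Measure.real] at hC1
      rwa [ENNReal.toReal_eq_one_iff] at hC1
  choose C hC1 hC2 hC3 hC4 hC5 using hC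
  have hCU : ∀ v y, y ∈ C v → ∀ q, y ∈ D q.1 q.2 → U v q := by
    intro v y hy q hyq
    by_cases hv : v ∈ W
    · have hl := (hlayW v).1 hv
      have hyR := (hD1 _ _ hyq).2
      have hvR : v ∈ q.1 := by
        rw [← hyR]
        show y ∈ Q v
        rwa [hQW v hv, ← hC4 v hv]
      simp only [U, hl, h0 v hl]
      exact hvR
    · obtain ⟨q', hU, hyq'⟩ := hEmem v y (hC5 v hv hy)
      by_cases hqq : q = q'
      · rwa [hqq]
      · exact (Set.disjoint_left.1 (hDdisj q q' hqq) hyq hyq').elim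
  refine ⟨C, ⟨hC1, hC2, hC3, fun u v huv => Set.disjoint_left.2 fun y hyu hyv => ?_⟩, hC4⟩
  -- Two adjacent vertices are not both in `W`, so one of the two sets is made of labelled pieces.
  by_cases hu : u ∈ W
  · by_cases hv : v ∈ W
    · have := hW u hu v hv huv.ne (SimpleGraph.Walk.cons huv SimpleGraph.Walk.nil)
      simp at this
    · obtain ⟨q, hU, hyq⟩ := hEmem v y (hC5 v hv hyv)
      exact hUdisj u v q huv (hCU u y hyu q hyq) hU
  · obtain ⟨q, hU, hyq⟩ := hEmem u y (hC5 u hu hyu)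
    exact hUdisj u v q huv hU (hCU v y hyv q hyq)
end
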